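/- Let k be a field of characteristic zero and V = k². For m, p ≥ 1 define φ_{m,p} : Hom_k(V^{⊗m}, V^{⊗p}) → Hom_k(V^{⊗(m+1)}, V^{⊗(p+1)}) by φ_{m,p}(f) = id_V ⊗ f + (−1)^{p+m+1} f ⊗ id_V. Then φ_{m,p} is injective whenever m ≠ p, and for m = p the kernel of φ_{m,m} is the one-dimensional subspace spanned by the identity map of V^{⊗m}. -/

import Mathlib

/-!
Read the matrix entries of `f` along infinite sequences of letters: `a(α, β)` is the entry at the
length-`m` prefix of `α` and the length-`p` prefix of `β`. When `α m = β p`, the equation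
`φ(f) = 0` says that `a(α, β) = 0` if `α 0 ≠ β 0`, and that `a(α, β)` is `±` the entry at the
shifted sequences if `α 0 = β 0`. If `α (m + i) = β (p + i)` for all `i`, the condition
`α m = β p` survives every shift, so `a(α, β) = 0` as soon as `α` and `β` differ anywhere.

Now extend two words `w` and `u` by repeating one and the same letter. If `m ≠ p`, a suitable letter
makes the two extensions differ, so `f = 0`. If `m = p`, distinct words have distinct extensions, so
`f` is diagonal; the sign is then `+`, and `m` shifts take every diagonal entry to the one at a
constant word, so `f` is a scalar.
-/

/-- Words of length `m` over the alphabet `{1, 2}` (paths of length `m` in the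
two-loops quiver). -/
abbrev Word (m : ℕ) := Fin m → Fin 2

/-- The `m`-th tensor power of `V = k²`, modelled concretely as the space of functions
`(Fin m → Fin 2) → k`, with basis `e_w` (the indicator of the word `w`) corresponding to
the basis tensor `e_{w₁} ⊗ ⋯ ⊗ e_{w_m}`. -/
abbrev TPow (k : Type) [Field k] (m : ℕ) := Word m → k

/-- The linear map `δ_{w,u} : V^{⊗m} → V^{⊗p}` sending the basis tensor indexed by `w`
to the basis tensor indexed by `u` and every other basis tensor to `0`. -/
def deltaMap (k : Type) [Field k] {m p : ℕ} (w : Word m) (u : Word p) :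
    TPow k m →ₗ[k] TPow k p where
  toFun f := fun x => if x = u then f w else 0
  map_add' f g := by funext x; by_cases h : x = u <;> simp [h]
  map_smul' c f := by funext x; by_cases h : x = u <;> simp [h]

/-- `id_V ⊗ g : V^{⊗(m+1)} → V^{⊗(p+1)}`, under the canonical identifications
`V^{⊗(m+1)} ≅ V ⊗ V^{⊗m}` and `V^{⊗(p+1)} ≅ V ⊗ V^{⊗p}`. -/
def idTensor (k : Type) [Field k] {m p : ℕ} (g : TPow k m →ₗ[k] TPow k p) :
    TPow k (m + 1) →ₗ[k] TPow k (p + 1) where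
  toFun f := fun y => g (fun x => f (Fin.cons (y 0) x)) (Fin.tail y)
  map_add' f₁ f₂ := by
    funext y
    show g (fun x => (f₁ + f₂) (Fin.cons (y 0) x)) (Fin.tail y)
        = g (fun x => f₁ (Fin.cons (y 0) x)) (Fin.tail y)
          + g (fun x => f₂ (Fin.cons (y 0) x)) (Fin.tail y)
    rw [show (fun x => (f₁ + f₂) (Fin.cons (y 0) x))
        = (fun x => f₁ (Fin.cons (y 0) x)) + fun x => f₂ (Fin.cons (y 0) x) from rfl,
      map_add]
    rfl
  map_smul' c f := by
    funext y
    show g (fun x => (c • f) (Fin.cons (y 0) x)) (Fin.tail y)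
        = c • g (fun x => f (Fin.cons (y 0) x)) (Fin.tail y)
    rw [show (fun x => (c • f) (Fin.cons (y 0) x))
        = c • fun x => f (Fin.cons (y 0) x) from rfl, map_smul]
    rfl

/-- `g ⊗ id_V : V^{⊗(m+1)} → V^{⊗(p+1)}`, under the canonical identifications
`V^{⊗(m+1)} ≅ V^{⊗m} ⊗ V` and `V^{⊗(p+1)} ≅ V^{⊗p} ⊗ V`. -/
def tensorId (k : Type) [Field k] {m p : ℕ} (g : TPow k m →ₗ[k] TPow k p) :
    TPow k (m + 1) →ₗ[k] TPow k (p + 1) where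
  toFun f := fun y => g (fun x => f (Fin.snoc x (y (Fin.last p)))) (Fin.init y)
  map_add' f₁ f₂ := by
    funext y
    show g (fun x => (f₁ + f₂) (Fin.snoc x (y (Fin.last p)))) (Fin.init y)
        = g (fun x => f₁ (Fin.snoc x (y (Fin.last p)))) (Fin.init y)
          + g (fun x => f₂ (Fin.snoc x (y (Fin.last p)))) (Fin.init y)
    rw [show (fun x => (f₁ + f₂) (Fin.snoc x (y (Fin.last p))))
        = (fun x => f₁ (Fin.snoc x (y (Fin.last p))))
          + fun x => f₂ (Fin.snoc x (y (Fin.last p))) from rfl,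
      map_add]
    rfl
  map_smul' c f := by
    funext y
    show g (fun x => (c • f) (Fin.snoc x (y (Fin.last p)))) (Fin.init y)
        = c • g (fun x => f (Fin.snoc x (y (Fin.last p)))) (Fin.init y)
    rw [show (fun x => (c • f) (Fin.snoc x (y (Fin.last p))))
        = c • fun x => f (Fin.snoc x (y (Fin.last p))) from rfl, map_smul]
    rfl

/-- `φ_{m,p} : Hom_k(V^{⊗m}, V^{⊗p}) → Hom_k(V^{⊗(m+1)}, V^{⊗(p+1)})`,
`φ_{m,p}(f) = id_V ⊗ f + (−1)^{p+m+1} f ⊗ id_V`. -/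
noncomputable def phiMap (k : Type) [Field k] (m p : ℕ) :
    (TPow k m →ₗ[k] TPow k p) →ₗ[k] (TPow k (m + 1) →ₗ[k] TPow k (p + 1)) where
  toFun g := idTensor k g + ((-1 : k) ^ (p + m + 1)) • tensorId k g
  map_add' g₁ g₂ := by
    refine LinearMap.ext fun f => ?_
    funext y
    show (g₁ + g₂) (fun x => f (Fin.cons (y 0) x)) (Fin.tail y)
        + (-1 : k) ^ (p + m + 1)
          * (g₁ + g₂) (fun x => f (Fin.snoc x (y (Fin.last p)))) (Fin.init y)
      = (g₁ (fun x => f (Fin.cons (y 0) x)) (Fin.tail y)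
          + (-1 : k) ^ (p + m + 1)
            * g₁ (fun x => f (Fin.snoc x (y (Fin.last p)))) (Fin.init y))
        + (g₂ (fun x => f (Fin.cons (y 0) x)) (Fin.tail y)
          + (-1 : k) ^ (p + m + 1)
            * g₂ (fun x => f (Fin.snoc x (y (Fin.last p)))) (Fin.init y))
    simp only [LinearMap.add_apply, Pi.add_apply]
    ring
  map_smul' c g := by
    refine LinearMap.ext fun f => ?_
    funext y
    show (c • g) (fun x => f (Fin.cons (y 0) x)) (Fin.tail y)
        + (-1 : k) ^ (p + m + 1)
          * (c • g) (fun x => f (Fin.snoc x (y (Fin.last p)))) (Fin.init y)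
      = c * (g (fun x => f (Fin.cons (y 0) x)) (Fin.tail y)
          + (-1 : k) ^ (p + m + 1)
            * g (fun x => f (Fin.snoc x (y (Fin.last p)))) (Fin.init y))
    simp only [LinearMap.smul_apply, Pi.smul_apply, smul_eq_mul]
    ring

section Sequences

variable {A : Type*} {m p : ℕ}

/-- The prefix of length `n` of an infinite sequence `α`: the word at which a matrix entry is read
along `α`. -/
def initialWord (n : ℕ) (α : ℕ → A) : Fin n → A := fun i => α i

theorem initialWord_succ_eq_cons (n : ℕ) (α : ℕ → A) :
    initialWord (n + 1) α = Fin.cons (α 0) (initialWord n (α ∘ (· + 1))) := by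
  funext i
  cases i using Fin.cases <;> simp [initialWord]

theorem initialWord_succ_eq_snoc (n : ℕ) (α : ℕ → A) :
    initialWord (n + 1) α = Fin.snoc (initialWord n α) (α n) := by
  funext i
  cases i using Fin.lastCases <;> simp [initialWord]

/-- The infinite sequence `w x x x …` extending a word `w` by a repeated letter `x`. The tail does
not depend on `w`, so it is the same for words of different lengths. -/
def padWord (w : Fin m → A) (x : A) (i : ℕ) : A := if h : i < m then w ⟨i, h⟩ else x

theorem padWord_of_lt (w : Fin m → A) (x : A) {i : ℕ} (h : i < m) : padWord w x i = w ⟨i, h⟩ :=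
  dif_pos h

theorem padWord_of_le (w : Fin m → A) (x : A) {i : ℕ} (h : m ≤ i) : padWord w x i = x :=
  dif_neg h.not_gt

theorem initialWord_padWord (w : Fin m → A) (x : A) : initialWord m (padWord w x) = w :=
  funext fun i => padWord_of_lt w x i.isLt

theorem padWord_comp_add (w : Fin m → A) (x : A) :
    padWord w x ∘ (· + m) = Function.const ℕ x :=
  funext fun i => padWord_of_le w x (Nat.le_add_left m i)

theorem padWord_left_injective (x : A) : Function.Injective fun w : Fin m → A => padWord w x :=
  Function.LeftInverse.injective (g := initialWord m) fun w => initialWord_padWord w x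

theorem exists_padWord_ne [Nontrivial A] (hmp : m ≠ p) (w : Fin m → A) (u : Fin p → A) :
    ∃ x, padWord w x ≠ padWord u x := by
  wlog h : m < p generalizing m p
  · obtain ⟨x, hx⟩ := this hmp.symm u w (by lia)
    exact ⟨x, hx.symm⟩
  obtain ⟨x, hx⟩ := exists_ne (u ⟨m, h⟩)
  refine ⟨x, Function.ne_iff.mpr ⟨m, ?_⟩⟩
  rwa [padWord_of_le w x le_rfl, padWord_of_lt u x h]

end Sequences

section TensorPowers

variable {k : Type} [Field k] {m p : ℕ}

theorem toMatrix'_idTensor_cons (g : TPow k m →ₗ[k] TPow k p) (a b : Fin 2) (w : Word m)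
    (u : Word p) :
    (idTensor k g).toMatrix' (Fin.cons b u) (Fin.cons a w)
      = if a = b then g.toMatrix' u w else 0 := by
  have hsingle : (fun x => (Pi.single (Fin.cons a w) 1 : TPow k (m + 1)) (Fin.cons b x))
      = if a = b then Pi.single w 1 else 0 := by
    funext x
    by_cases hab : a = b
    · simp [hab, Pi.single_apply, Fin.cons_inj]
    · simp [hab, Fin.cons_inj, Ne.symm hab]
  simp only [LinearMap.toMatrix'_apply, idTensor, LinearMap.coe_mk, AddHom.coe_mk, Fin.tail_cons,
    Fin.cons_zero, hsingle]
  split_ifs <;> simp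

theorem toMatrix'_tensorId_snoc (g : TPow k m →ₗ[k] TPow k p) (a b : Fin 2) (w : Word m)
    (u : Word p) :
    (tensorId k g).toMatrix' (Fin.snoc u b) (Fin.snoc w a)
      = if a = b then g.toMatrix' u w else 0 := by
  have hsingle : (fun x => (Pi.single (Fin.snoc w a) 1 : TPow k (m + 1)) (Fin.snoc x b))
      = if a = b then Pi.single w 1 else 0 := by
    funext x
    by_cases hab : a = b
    · simp [hab, Pi.single_apply, Fin.snoc_inj]
    · simp [hab, Fin.snoc_inj, Ne.symm hab]
  simp only [LinearMap.toMatrix'_apply, tensorId, LinearMap.coe_mk, AddHom.coe_mk, Fin.init_snoc,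
    Fin.snoc_last, hsingle]
  split_ifs <;> simp

theorem idTensor_id : idTensor k (LinearMap.id : TPow k m →ₗ[k] TPow k m) = LinearMap.id := by
  ext w u
  simp [idTensor]

theorem tensorId_id : tensorId k (LinearMap.id : TPow k m →ₗ[k] TPow k m) = LinearMap.id := by
  ext w u
  simp [tensorId]

theorem phiMap_apply (g : TPow k m →ₗ[k] TPow k p) :
    phiMap k m p g = idTensor k g + (-1 : k) ^ (p + m + 1) • tensorId k g :=
  rfl

theorem phiMap_id : phiMap k m m LinearMap.id = 0 := by
  rw [phiMap_apply, idTensor_id, tensorId_id, (Even.add_self m).add_one.neg_one_pow]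
  module

/-- The matrix entry of `g` in the column indexed by the length-`m` prefix of `α` and the row
indexed by the length-`p` prefix of `β`. Reading entries along infinite sequences turns the
operation "delete the first letter of a word and append a new last letter" into a shift. -/
def prefixEntry (g : TPow k m →ₗ[k] TPow k p) (α β : ℕ → Fin 2) : k :=
  g.toMatrix' (initialWord p β) (initialWord m α)

theorem prefixEntry_padWord (g : TPow k m →ₗ[k] TPow k p) (w : Word m) (u : Word p) (x : Fin 2) :
    prefixEntry g (padWord w x) (padWord u x) = g.toMatrix' u w := by
  rw [prefixEntry, initialWord_padWord, initialWord_padWord]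

theorem prefixEntry_phiMap (g : TPow k m →ₗ[k] TPow k p) (α β : ℕ → Fin 2) :
    prefixEntry (phiMap k m p g) α β
      = (if α 0 = β 0 then prefixEntry g (α ∘ (· + 1)) (β ∘ (· + 1)) else 0)
        + (-1) ^ (p + m + 1) * if α m = β p then prefixEntry g α β else 0 := by
  have hid : prefixEntry (idTensor k g) α β
      = if α 0 = β 0 then prefixEntry g (α ∘ (· + 1)) (β ∘ (· + 1)) else 0 := by
    rw [prefixEntry, initialWord_succ_eq_cons, initialWord_succ_eq_cons, toMatrix'_idTensor_cons]
    rfl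
  have htensor : prefixEntry (tensorId k g) α β
      = if α m = β p then prefixEntry g α β else 0 := by
    rw [prefixEntry, initialWord_succ_eq_snoc, initialWord_succ_eq_snoc, toMatrix'_tensorId_snoc]
    rfl
  rw [← hid, ← htensor, phiMap_apply]
  simp [prefixEntry]

variable {g : TPow k m →ₗ[k] TPow k p} {α β : ℕ → Fin 2}

theorem prefixEntry_eq_shift_of_phiMap_eq_zero (hg : phiMap k m p g = 0) (h : α m = β p) :
    prefixEntry g α β
      = (-1) ^ (p + m) * if α 0 = β 0 then prefixEntry g (α ∘ (· + 1)) (β ∘ (· + 1)) else 0 := by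
  have hzero : prefixEntry (phiMap k m p g) α β = 0 := by simp [hg, prefixEntry]
  have hsq : ((-1 : k) ^ (p + m)) * (-1) ^ (p + m) = 1 := by
    rw [← mul_pow, neg_one_mul, neg_neg, one_pow]
  rw [prefixEntry_phiMap, if_pos h, pow_succ] at hzero
  linear_combination (-(-1) ^ (p + m)) * hzero - prefixEntry g α β * hsq

theorem prefixEntry_eq_zero_of_phiMap_eq_zero (hg : phiMap k m p g = 0)
    (htail : ∀ i, α (m + i) = β (p + i)) (hne : α ≠ β) : prefixEntry g α β = 0 := by
  rw [Function.ne_iff] at hne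
  obtain ⟨n, hn⟩ := hne
  induction n generalizing α β with
  | zero => rw [prefixEntry_eq_shift_of_phiMap_eq_zero hg (htail 0), if_neg hn, mul_zero]
  | succ n ih =>
    have hshift : prefixEntry g (α ∘ (· + 1)) (β ∘ (· + 1)) = 0 := ih (fun i => htail (i + 1)) hn
    rw [prefixEntry_eq_shift_of_phiMap_eq_zero hg (htail 0), hshift, ite_self, mul_zero]

theorem toMatrix'_eq_zero_of_padWord_ne (hg : phiMap k m p g = 0) {w : Word m} {u : Word p}
    {x : Fin 2} (hne : padWord w x ≠ padWord u x) : g.toMatrix' u w = 0 := by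
  rw [← prefixEntry_padWord g w u x]
  refine prefixEntry_eq_zero_of_phiMap_eq_zero hg (fun i => ?_) hne
  rw [padWord_of_le w x (Nat.le_add_right m i), padWord_of_le u x (Nat.le_add_right p i)]

theorem prefixEntry_self_eq_shift_of_phiMap_eq_zero {g : TPow k m →ₗ[k] TPow k m}
    (hg : phiMap k m m g = 0) (n : ℕ) (α : ℕ → Fin 2) :
    prefixEntry g α α = prefixEntry g (α ∘ (· + n)) (α ∘ (· + n)) := by
  induction n generalizing α with
  | zero => rfl
  | succ n ih =>
    rw [prefixEntry_eq_shift_of_phiMap_eq_zero hg rfl, if_pos rfl, (Even.add_self m).neg_one_pow,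
      one_mul, ih]
    rfl

theorem phiMap_injective_of_ne (hmp : m ≠ p) : Function.Injective (phiMap k m p) := by
  refine (injective_iff_map_eq_zero _).mpr fun g hg => ?_
  refine LinearMap.toMatrix'.map_eq_zero_iff.mp (Matrix.ext fun u w => ?_)
  obtain ⟨x, hx⟩ := exists_padWord_ne hmp w u
  exact toMatrix'_eq_zero_of_padWord_ne hg hx

theorem exists_smul_id_eq_of_phiMap_eq_zero {g : TPow k m →ₗ[k] TPow k m}
    (hg : phiMap k m m g = 0) : ∃ c : k, c • LinearMap.id = g := by
  refine ⟨prefixEntry g (Function.const ℕ 0) (Function.const ℕ 0), ?_⟩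
  refine LinearMap.toMatrix'.injective (Matrix.ext fun u w => ?_)
  rw [map_smul, LinearMap.toMatrix'_id, Matrix.smul_apply, smul_eq_mul]
  obtain rfl | huw := eq_or_ne u w
  · rw [Matrix.one_apply_eq, mul_one, ← prefixEntry_padWord g u u 0,
      prefixEntry_self_eq_shift_of_phiMap_eq_zero hg m (padWord u 0), padWord_comp_add]
  · rw [Matrix.one_apply_ne huw, mul_zero,
      toMatrix'_eq_zero_of_padWord_ne hg ((padWord_left_injective 0).ne huw.symm)]

theorem ker_phiMap_self : LinearMap.ker (phiMap k m m) = k ∙ LinearMap.id := by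
  refine le_antisymm (fun g hg => ?_) ?_
  · exact Submodule.mem_span_singleton.mpr (exists_smul_id_eq_of_phiMap_eq_zero hg)
  · exact (Submodule.span_singleton_le_iff_mem _ _).mpr phiMap_id

end TensorPowers

theorem phi_injective_and_kernel_general (k : Type) [Field k] (m p : ℕ) :
    (m ≠ p → Function.Injective ⇑(phiMap k m p))
      ∧ LinearMap.ker (phiMap k m m)
          = Submodule.span k {(LinearMap.id : TPow k m →ₗ[k] TPow k m)}
      ∧ Module.finrank k (LinearMap.ker (phiMap k m m)) = 1 := by
  refine ⟨phiMap_injective_of_ne, ker_phiMap_self, ?_⟩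
  rw [ker_phiMap_self]
  exact finrank_span_singleton (one_ne_zero (α := Module.End k (TPow k m)))

/-- for `k` of characteristic zero and `V = k²`, the map `φ_{m,p}` is
injective whenever `m ≠ p`, and for `m = p` the kernel of `φ_{m,m}` is the one-dimensional
subspace spanned by the identity map of `V^{⊗m}`. -/
theorem phi_injective_and_kernel (k : Type) [Field k] [CharZero k]
    (m p : ℕ) (hm : 1 ≤ m) (hp : 1 ≤ p) :
    (m ≠ p → Function.Injective ⇑(phiMap k m p))
      ∧ LinearMap.ker (phiMap k m m)
          = Submodule.span k {(LinearMap.id : TPow k m →ₗ[k] TPow k m)}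
      ∧ Module.finrank k (LinearMap.ker (phiMap k m m)) = 1 :=
  phi_injective_and_kernel_general k m p
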